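/- Membership in a Q-stopper is constant along a chain: for q ∈ Q, the chain element Sum.inr q lies in a Q-stopper if and only if Sum.inl (g q) lies in a Q-stopper; likewise, for p ∈ P, Sum.inl p lies in a Q-stopper if and only if Sum.inr (f p) lies in a Q-stopper. -/

import Mathlib

def SB.Valid {α β : Type*} (P : Set α) (Q : Set β) : α ⊕ β → Prop
  | Sum.inl p => p ∈ P
  | Sum.inr q => q ∈ Q

def SB.step {α β : Type*} (f : α → β) (g : β → α) : α ⊕ β → α ⊕ β
  | Sum.inl p => Sum.inr (f p)
  | Sum.inr q => Sum.inl (g q)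

def SB.ChainLE {α β : Type*} (f : α → β) (g : β → α) : α ⊕ β → α ⊕ β → Prop :=
  Relation.ReflTransGen (fun x y => y = SB.step f g x)

def SB.Initial {α β : Type*} (P : Set α) (Q : Set β) (f : α → β) (g : β → α) :
    α ⊕ β → Prop
  | Sum.inl p => p ∉ g '' Q
  | Sum.inr q => q ∉ f '' P

def SB.InQStopper {α β : Type*} (P : Set α) (Q : Set β) (f : α → β) (g : β → α)
    (x : α ⊕ β) : Prop :=
  ∃ q ∈ Q, SB.Initial P Q f g (Sum.inr q) ∧ SB.ChainLE f g (Sum.inr q) x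

/-!
On valid elements `SB.step` is an injective self-map whose values are never initial. A chain from
an initial element to `step x` is therefore nonempty, and its penultimate element must be `x`.
-/

section Iteration

variable {γ : Type*} {s : γ → γ} {S : Set γ} {x y : γ}

theorem mem_of_reflTransGen_of_mapsTo (hs : Set.MapsTo s S S) (hx : x ∈ S)
    (hxy : Relation.ReflTransGen (fun a b => b = s a) x y) : y ∈ S := by
  induction hxy with
  | refl => exact hx
  | tail _ hbc hb => exact hbc ▸ hs hb

theorem reflTransGen_of_reflTransGen_apply (hs : Set.MapsTo s S S) (hinj : Set.InjOn s S)
    (hx : x ∈ S) (hy : y ∈ S) (hne : x ≠ s y)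
    (hxy : Relation.ReflTransGen (fun a b => b = s a) x (s y)) :
    Relation.ReflTransGen (fun a b => b = s a) x y := by
  obtain hyx | ⟨z, hxz, hyz⟩ := hxy.cases_tail
  · exact absurd hyx.symm hne
  · have hz : z ∈ S := mem_of_reflTransGen_of_mapsTo hs hx hxz
    exact hinj hy hz hyz ▸ hxz

end Iteration

namespace SB

variable {α β : Type*} {P : Set α} {Q : Set β} {f : α → β} {g : β → α} {x y : α ⊕ β}

theorem mapsTo_step (hfm : Set.MapsTo f P Q) (hgm : Set.MapsTo g Q P) :
    Set.MapsTo (step f g) {x | Valid P Q x} {x | Valid P Q x} := by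
  rintro (p | q) hx
  · exact hfm hx
  · exact hgm hx

theorem injOn_step (hfi : Set.InjOn f P) (hgi : Set.InjOn g Q) :
    Set.InjOn (step f g) {x | Valid P Q x} := by
  rintro (p | q) hx (p' | q') hy hxy
  · exact congrArg Sum.inl (hfi hx hy (Sum.inr.inj hxy))
  · cases hxy
  · cases hxy
  · exact congrArg Sum.inr (hgi hx hy (Sum.inl.inj hxy))

theorem Initial.ne_step (hx : Initial P Q f g x) (hy : Valid P Q y) : x ≠ step f g y := by
  rintro rfl
  rcases y with p | q
  · exact hx ⟨p, hy, rfl⟩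
  · exact hx ⟨q, hy, rfl⟩

theorem InQStopper.step (hx : InQStopper P Q f g x) : InQStopper P Q f g (step f g x) := by
  obtain ⟨q, hq, hinit, hqx⟩ := hx
  exact ⟨q, hq, hinit, hqx.tail rfl⟩

theorem InQStopper.of_step (hfm : Set.MapsTo f P Q) (hfi : Set.InjOn f P)
    (hgm : Set.MapsTo g Q P) (hgi : Set.InjOn g Q) (hx : Valid P Q x)
    (hstep : InQStopper P Q f g (SB.step f g x)) : InQStopper P Q f g x := by
  obtain ⟨q, hq, hinit, hqx⟩ := hstep
  exact ⟨q, hq, hinit, reflTransGen_of_reflTransGen_apply (mapsTo_step hfm hgm)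
    (injOn_step hfi hgi) hq hx (hinit.ne_step hx) hqx⟩

theorem inQStopper_step_iff (hfm : Set.MapsTo f P Q) (hfi : Set.InjOn f P)
    (hgm : Set.MapsTo g Q P) (hgi : Set.InjOn g Q) (hx : Valid P Q x) :
    InQStopper P Q f g (step f g x) ↔ InQStopper P Q f g x :=
  ⟨InQStopper.of_step hfm hfi hgm hgi hx, InQStopper.step⟩

end SB

theorem inQStopper_constant_along_chain {α β : Type*} (P : Set α) (Q : Set β)
    (f : α → β) (g : β → α)
    (hfm : Set.MapsTo f P Q) (hfi : Set.InjOn f P)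
    (hgm : Set.MapsTo g Q P) (hgi : Set.InjOn g Q) :
    (∀ q ∈ Q, SB.InQStopper P Q f g (Sum.inr q) ↔
      SB.InQStopper P Q f g (Sum.inl (g q))) ∧
    (∀ p ∈ P, SB.InQStopper P Q f g (Sum.inl p) ↔
      SB.InQStopper P Q f g (Sum.inr (f p))) :=
  ⟨fun q hq => (SB.inQStopper_step_iff (x := Sum.inr q) hfm hfi hgm hgi hq).symm,
    fun p hp => (SB.inQStopper_step_iff (x := Sum.inl p) hfm hfi hgm hgi hp).symm⟩
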